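/- Let T be a Wakamatsu tilting (S,R)-bimodule and N a Gorenstein flat right S-module. If either the projective dimension of T as a left S-module is finite, or the injective dimension of T as a left S-module is finite, then N belongs to the Auslander class 𝒜_T(S). -/

import Mathlib

open Function MulOpposite

universe u

noncomputable section

/-! ## Chain conditions -/

/-- A ring is right coherent if every finitely generated right ideal is finitely presented. -/
def IsRightCoherentRing (R : Type u) [Ring R] : Prop :=
  ∀ I : Submodule Rᵐᵒᵖ R, I.FG → Module.FinitePresentation Rᵐᵒᵖ I

/-- A ring is left coherent if every finitely generated left ideal is finitely presented. -/
def IsLeftCoherentRing (S : Type u) [Ring S] : Prop :=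
  ∀ I : Submodule S S, I.FG → Module.FinitePresentation S I

/-- A ring is right Noetherian if every right ideal is finitely generated. -/
def IsRightNoetherianRing (R : Type u) [Ring R] : Prop :=
  ∀ I : Submodule Rᵐᵒᵖ R, I.FG

/-! ## The tensor product `N ⊗_S T` of a right `S`-module `N` with a left `S`-module `T` -/

section MTensor

variable (S : Type u) [Ring S]
variable (N : Type u) [AddCommGroup N] [Module Sᵐᵒᵖ N]
variable (T : Type u) [AddCommGroup T] [Module S T]

/-- The subgroup of balancing relations defining `N ⊗_S T` as a quotient of `T ⊗_ℤ N`. -/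
def mtRel : AddSubgroup (TensorProduct ℤ T N) :=
  AddSubgroup.closure
    {x | ∃ (s : S) (t : T) (n : N), x = (s • t) ⊗ₜ[ℤ] n - t ⊗ₜ[ℤ] (op s • n)}

/-- `MTensor S N T` is the tensor product `N ⊗_S T` of a right `S`-module `N` with a left
`S`-module `T`, realized as a quotient of `T ⊗_ℤ N`. -/
def MTensor : Type u := TensorProduct ℤ T N ⧸ mtRel S N T

instance : AddCommGroup (MTensor S N T) :=
  inferInstanceAs (AddCommGroup (TensorProduct ℤ T N ⧸ mtRel S N T))

variable {S N T}

/-- `MTensor.mk n t` is the element `n ⊗ t` of `N ⊗_S T`. -/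
def MTensor.mk (n : N) (t : T) : MTensor S N T := QuotientAddGroup.mk (t ⊗ₜ[ℤ] n)

section Map

variable {N' : Type u} [AddCommGroup N'] [Module Sᵐᵒᵖ N']

/-- Functoriality of `N ⊗_S T` in the right `S`-module variable `N`. -/
def MTensor.map (g : N →ₗ[Sᵐᵒᵖ] N') : MTensor S N T →+ MTensor S N' T :=
  QuotientAddGroup.map _ _
    (LinearMap.lTensor T g.toAddMonoidHom.toIntLinearMap).toAddMonoidHom
    (by
      refine (AddSubgroup.closure_le _).2 ?_
      rintro x ⟨s, t, n, rfl⟩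
      simp only [SetLike.mem_coe, AddSubgroup.mem_comap, LinearMap.toAddMonoidHom_coe,
        map_sub, LinearMap.lTensor_tmul, AddMonoidHom.coe_toIntLinearMap,
        LinearMap.toAddMonoidHom_coe, map_smul]
      exact AddSubgroup.subset_closure ⟨s, t, g n, rfl⟩)

end Map

section LMap

variable {T' : Type u} [AddCommGroup T'] [Module S T']

/-- Functoriality of `N ⊗_S T` in the left `S`-module variable `T`. -/
def MTensor.lmap (h : T →ₗ[S] T') : MTensor S N T →+ MTensor S N T' :=
  QuotientAddGroup.map _ _
    (LinearMap.rTensor N h.toAddMonoidHom.toIntLinearMap).toAddMonoidHom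
    (by
      refine (AddSubgroup.closure_le _).2 ?_
      rintro x ⟨s, t, n, rfl⟩
      simp only [SetLike.mem_coe, AddSubgroup.mem_comap, LinearMap.toAddMonoidHom_coe,
        map_sub, LinearMap.rTensor_tmul, AddMonoidHom.coe_toIntLinearMap, map_smul]
      exact AddSubgroup.subset_closure ⟨s, h t, n, rfl⟩)

end LMap

section Bimod

variable (R : Type u) [Ring R] [Module Rᵐᵒᵖ T] [SMulCommClass S Rᵐᵒᵖ T]

instance MTensor.instSMul : SMul Rᵐᵒᵖ (MTensor S N T) :=
  ⟨fun ρ =>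
    QuotientAddGroup.map _ _ (DistribMulAction.toAddMonoidHom (TensorProduct ℤ T N) ρ)
      (by
        refine (AddSubgroup.closure_le _).2 ?_
        rintro x ⟨s, t, n, rfl⟩
        simp only [SetLike.mem_coe, AddSubgroup.mem_comap,
          DistribMulAction.toAddMonoidHom_apply, smul_sub, TensorProduct.smul_tmul']
        exact AddSubgroup.subset_closure ⟨s, ρ • t, n, by rw [smul_comm s ρ t]⟩)⟩

instance MTensor.instModule : Module Rᵐᵒᵖ (MTensor S N T) :=
  Function.Surjective.module Rᵐᵒᵖ (QuotientAddGroup.mk' (mtRel S N T))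
    (QuotientAddGroup.mk'_surjective _) (fun _ _ => rfl)

theorem MTensor.smul_mk (ρ : Rᵐᵒᵖ) (n : N) (t : T) :
    ρ • (MTensor.mk n t : MTensor S N T) = MTensor.mk n (ρ • t) := by
  show QuotientAddGroup.mk (ρ • (t ⊗ₜ[ℤ] n)) = QuotientAddGroup.mk ((ρ • t) ⊗ₜ[ℤ] n)
  rw [TensorProduct.smul_tmul']

theorem MTensor.mk_add_right (n : N) (t t' : T) :
    (MTensor.mk n (t + t') : MTensor S N T) = MTensor.mk n t + MTensor.mk n t' := by
  show QuotientAddGroup.mk _ = _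
  rw [TensorProduct.add_tmul]
  rfl

/-- The natural map `θ_N : N → Hom_R(T, N ⊗_S T)`, `n ↦ (t ↦ n ⊗ t)`. -/
def MTensor.theta (n : N) : T →ₗ[Rᵐᵒᵖ] MTensor S N T where
  toFun t := MTensor.mk n t
  map_add' t t' := MTensor.mk_add_right n t t'
  map_smul' ρ t := (MTensor.smul_mk R ρ n t).symm

variable (S T N) in
/-- The natural map `θ_N : N → Hom_R(T, N ⊗_S T)` as a function. -/
def MTensor.thetaFun : N → (T →ₗ[Rᵐᵒᵖ] MTensor S N T) := fun n => MTensor.theta R n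

end Bimod

end MTensor

/-! ## The right `S`-module structure on `Hom_A(T, M)` induced by a left `S`-action on `T` -/

section HomModule

variable {B A : Type u} [Ring B] [Ring A]
variable {T : Type u} [AddCommGroup T] [Module A T] [Module B T] [SMulCommClass B A T]
variable {M : Type u} [AddCommGroup M] [Module A M]

instance homDomSMul : SMul Bᵐᵒᵖ (T →ₗ[A] M) :=
  ⟨fun b f =>
    { toFun := fun t => f (b.unop • t)
      map_add' := fun t t' => by
        show f (b.unop • (t + t')) = f (b.unop • t) + f (b.unop • t')
        rw [smul_add, map_add]
      map_smul' := fun a t => by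
        show f (b.unop • a • t) = a • f (b.unop • t)
        rw [smul_comm b.unop a t, map_smul] }⟩

@[simp] theorem homDomSMul_apply (b : Bᵐᵒᵖ) (f : T →ₗ[A] M) (t : T) :
    (b • f) t = f (b.unop • t) := rfl

instance homDomModule : Module Bᵐᵒᵖ (T →ₗ[A] M) where
  one_smul f := LinearMap.ext fun t => by simp
  mul_smul b b' f := LinearMap.ext fun t => by simp [mul_smul]
  smul_zero b := LinearMap.ext fun t => rfl
  smul_add b f g := LinearMap.ext fun t => rfl
  add_smul b b' f := LinearMap.ext fun t => by simp [add_smul]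
  zero_smul f := LinearMap.ext fun t => by simp

end HomModule

/-! ## The evaluation map `ν_M : Hom_R(T, M) ⊗_S T → M` -/

section Nu

variable (S R : Type u) [Ring S] [Ring R]
variable (T : Type u) [AddCommGroup T] [Module S T] [Module Rᵐᵒᵖ T] [SMulCommClass S Rᵐᵒᵖ T]
variable (M : Type u) [AddCommGroup M] [Module Rᵐᵒᵖ M]

/-- The evaluation map `ν_M : Hom_R(T, M) ⊗_S T → M`, `f ⊗ t ↦ f t`. -/
def MTensor.nuFun : MTensor S (T →ₗ[Rᵐᵒᵖ] M) T →+ M :=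
  QuotientAddGroup.lift _
    (TensorProduct.liftAddHom
      { toFun := fun t =>
          { toFun := fun f : T →ₗ[Rᵐᵒᵖ] M => f t
            map_zero' := rfl
            map_add' := fun f g => rfl }
        map_zero' := AddMonoidHom.ext fun f => f.map_zero
        map_add' := fun t t' => AddMonoidHom.ext fun f => f.map_add t t' }
      (fun z t f => by
        show f (z • t) = (z • f) t
        rw [map_zsmul, LinearMap.smul_apply]))
    (by
      refine (AddSubgroup.closure_le _).2 ?_
      rintro x ⟨s, t, f, rfl⟩
      simp only [SetLike.mem_coe, AddMonoidHom.mem_ker, map_sub,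
        TensorProduct.liftAddHom_tmul, AddMonoidHom.coe_mk, ZeroHom.coe_mk]
      show f (s • t) - (op s • f) t = 0
      rw [homDomSMul_apply]
      simp)

end Nu


/-! ## Resolutions and derived-functor vanishing -/

/-- The data of a nonnegatively graded chain complex `⋯ → P 1 → P 0 → X` of `A`-modules. -/
structure ResolutionData (A : Type u) [Ring A] (X : Type u) [AddCommGroup X] [Module A X] :
    Type (u + 1) where
  P : ℕ → Type u
  [instAdd : ∀ n, AddCommGroup (P n)]
  [instMod : ∀ n, Module A (P n)]
  d : ∀ n, P (n + 1) →ₗ[A] P n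
  ε : P 0 →ₗ[A] X

attribute [instance] ResolutionData.instAdd ResolutionData.instMod

/-- The property of being a projective resolution. -/
structure ResolutionData.IsProjResolution {A : Type u} [Ring A] {X : Type u} [AddCommGroup X]
    [Module A X] (Q : ResolutionData A X) : Prop where
  proj : ∀ n, Module.Projective A (Q.P n)
  surj : Function.Surjective Q.ε
  exact0 : Function.Exact (Q.d 0) Q.ε
  exactSucc : ∀ n, Function.Exact (Q.d (n + 1)) (Q.d n)

/-- `X` has a resolution by finitely generated projective `A`-modules. -/
def HasFGProjResolution (A : Type u) [Ring A] (X : Type u) [AddCommGroup X] [Module A X] : Prop :=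
  ∃ Q : ResolutionData A X, Q.IsProjResolution ∧ ∀ n, Module.Finite A (Q.P n)

/-- `Ext^i_A(X, Y) = 0` for all `i ≥ 1`: some (equivalently, any) projective resolution of `X`
has `Hom_A(-, Y)`-complex exact at all positive degrees. -/
def ExtVanishAll (A : Type u) [Ring A] (X Y : Type u) [AddCommGroup X] [Module A X]
    [AddCommGroup Y] [Module A Y] : Prop :=
  ∃ Q : ResolutionData A X, Q.IsProjResolution ∧
    ∀ j : ℕ, Function.Exact
      (fun f : Q.P j →ₗ[A] Y => f.comp (Q.d j))
      (fun f : Q.P (j + 1) →ₗ[A] Y => f.comp (Q.d (j + 1)))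

/-- `Ext^1_A(X, Y) = 0`: every short exact sequence `0 → Y → E → X → 0` splits. -/
def Ext1Vanishes (A : Type u) [Ring A] (X Y : Type u) [AddCommGroup X] [Module A X]
    [AddCommGroup Y] [Module A Y] : Prop :=
  ∀ (E : Type u) [AddCommGroup E] [Module A E] (i : Y →ₗ[A] E) (p : E →ₗ[A] X),
    Function.Injective i → Function.Surjective p → Function.Exact i p →
      ∃ s : X →ₗ[A] E, p.comp s = LinearMap.id

/-- `Tor^S_i(N, T) = 0` for all `i ≥ 1`: some (equivalently, any) projective resolution of the
right `S`-module `N` stays exact in positive degrees after applying `- ⊗_S T`. -/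
def TorVanishAll (S : Type u) [Ring S] (N : Type u) [AddCommGroup N] [Module Sᵐᵒᵖ N]
    (T : Type u) [AddCommGroup T] [Module S T] : Prop :=
  ∃ Q : ResolutionData Sᵐᵒᵖ N, Q.IsProjResolution ∧
    ∀ j : ℕ, Function.Exact
      (⇑(MTensor.map (T := T) (Q.d (j + 1))))
      (⇑(MTensor.map (T := T) (Q.d j)))

/-! ## Homological dimensions -/

/-- A surjection onto `M` from some module. -/
structure EpiOnto (A : Type u) [Ring A] (M : ModuleCat.{u} A) : Type (u + 1) where
  P : ModuleCat.{u} A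
  f : P →ₗ[A] M
  surj : Function.Surjective f

/-- An injection of `M` into some module. -/
structure MonoInto (A : Type u) [Ring A] (M : ModuleCat.{u} A) : Type (u + 1) where
  E : ModuleCat.{u} A
  f : M →ₗ[A] E
  inj : Function.Injective f

/-- `HasClassResolution A 𝒞 n M` says that there is an exact sequence
`0 → C_n → ⋯ → C_0 → M → 0` with all `C_i` in the class `𝒞`. -/
def HasClassResolution (A : Type u) [Ring A] (C : ModuleCat.{u} A → Prop) :
    ℕ → ModuleCat.{u} A → Prop
  | 0, M => C M
  | n + 1, M => ∃ e : EpiOnto A M, C e.P ∧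
      HasClassResolution A C n (ModuleCat.of A (LinearMap.ker e.f))

/-- `HasClassCoresolution A 𝒞 n M` says that there is an exact sequence
`0 → M → C^0 → ⋯ → C^n → 0` with all `C^i` in the class `𝒞`. -/
def HasClassCoresolution (A : Type u) [Ring A] (C : ModuleCat.{u} A → Prop) :
    ℕ → ModuleCat.{u} A → Prop
  | 0, M => C M
  | n + 1, M => ∃ m : MonoInto A M, C m.E ∧
      HasClassCoresolution A C n (ModuleCat.of A ((↥m.E) ⧸ LinearMap.range m.f))

/-- The projective dimension of `M` is at most `n`. -/
def ProjDimLE (A : Type u) [Ring A] (M : Type u) [AddCommGroup M] [Module A M] (n : ℕ) : Prop :=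
  HasClassResolution A (fun P => Module.Projective A P) n (ModuleCat.of A M)

/-- The injective dimension of `M` is at most `n`. -/
def InjDimLE (A : Type u) [Ring A] (M : Type u) [AddCommGroup M] [Module A M] (n : ℕ) : Prop :=
  HasClassCoresolution A (fun E => Module.Injective A E) n (ModuleCat.of A M)

/-- A right `S`-module `N` is flat if `N ⊗_S -` preserves injections of left `S`-modules. -/
def IsFlatRightModule (S : Type u) [Ring S] (N : Type u) [AddCommGroup N] [Module Sᵐᵒᵖ N] :
    Prop :=
  ∀ (X Y : Type u) [AddCommGroup X] [Module S X] [AddCommGroup Y] [Module S Y]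
    (g : X →ₗ[S] Y), Function.Injective g →
      Function.Injective (MTensor.lmap (N := N) g)

/-- The flat dimension of the right `S`-module `N` is at most `n`. -/
def FlatDimLE (S : Type u) [Ring S] (N : Type u) [AddCommGroup N] [Module Sᵐᵒᵖ N] (n : ℕ) :
    Prop :=
  HasClassResolution Sᵐᵒᵖ (fun P => IsFlatRightModule S P) n (ModuleCat.of Sᵐᵒᵖ N)

/-! ## Gorenstein homological algebra -/

/-- The data of a `ℤ`-indexed complex of `A`-modules. -/
structure ZComplex (A : Type u) [Ring A] : Type (u + 1) where
  P : ℤ → Type u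
  [instAdd : ∀ i, AddCommGroup (P i)]
  [instMod : ∀ i, Module A (P i)]
  d : ∀ i, P i →ₗ[A] P (i + 1)

attribute [instance] ZComplex.instAdd ZComplex.instMod

/-- Exactness of a `ℤ`-indexed complex. -/
def ZComplex.IsExact {A : Type u} [Ring A] (C : ZComplex A) : Prop :=
  ∀ i, Function.Exact (C.d i) (C.d (i + 1))

/-- A module is Gorenstein projective if it is a kernel of a totally acyclic complex of
projective modules. -/
def IsGorensteinProjective (A : Type u) [Ring A] (N : Type u) [AddCommGroup N] [Module A N] :
    Prop :=
  ∃ C : ZComplex A, (∀ i, Module.Projective A (C.P i)) ∧ C.IsExact ∧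
    (∀ (Q : Type u) [AddCommGroup Q] [Module A Q], Module.Projective A Q →
      ∀ i, Function.Exact
        (fun f : C.P (i + 1 + 1) →ₗ[A] Q => f.comp (C.d (i + 1)))
        (fun f : C.P (i + 1) →ₗ[A] Q => f.comp (C.d i))) ∧
    Nonempty (N ≃ₗ[A] LinearMap.ker (C.d 0))

/-- A module is Gorenstein injective if it is a kernel of a totally acyclic complex of
injective modules. -/
def IsGorensteinInjective (A : Type u) [Ring A] (M : Type u) [AddCommGroup M] [Module A M] :
    Prop :=
  ∃ C : ZComplex A, (∀ i, Module.Injective A (C.P i)) ∧ C.IsExact ∧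
    (∀ (I : Type u) [AddCommGroup I] [Module A I], Module.Injective A I →
      ∀ i, Function.Exact
        (fun f : I →ₗ[A] C.P i => (C.d i).comp f)
        (fun f : I →ₗ[A] C.P (i + 1) => (C.d (i + 1)).comp f)) ∧
    Nonempty (M ≃ₗ[A] LinearMap.ker (C.d 0))

/-- A right `S`-module is Gorenstein flat if it is a kernel of a complex of flat right
`S`-modules which stays exact after tensoring with any injective left `S`-module. -/
def IsGorensteinFlat (S : Type u) [Ring S] (N : Type u) [AddCommGroup N] [Module Sᵐᵒᵖ N] :
    Prop :=
  ∃ C : ZComplex Sᵐᵒᵖ, (∀ i, IsFlatRightModule S (C.P i)) ∧ C.IsExact ∧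
    (∀ (I : Type u) [AddCommGroup I] [Module S I], Module.Injective S I →
      ∀ i, Function.Exact
        (⇑(MTensor.map (T := I) (C.d i)))
        (⇑(MTensor.map (T := I) (C.d (i + 1))))) ∧
    Nonempty (N ≃ₗ[Sᵐᵒᵖ] LinearMap.ker (C.d 0))

/-- The Gorenstein projective dimension of `N` is at most `n`. -/
def GpdLE (A : Type u) [Ring A] (N : Type u) [AddCommGroup N] [Module A N] (n : ℕ) : Prop :=
  HasClassResolution A (fun P => IsGorensteinProjective A P) n (ModuleCat.of A N)

/-- The Gorenstein flat dimension of the right `S`-module `N` is at most `n`. -/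
def GfdLE (S : Type u) [Ring S] (N : Type u) [AddCommGroup N] [Module Sᵐᵒᵖ N] (n : ℕ) : Prop :=
  HasClassResolution Sᵐᵒᵖ (fun P => IsGorensteinFlat S P) n (ModuleCat.of Sᵐᵒᵖ N)

/-- The Gorenstein injective dimension of `M` is at most `n`. -/
def GidLE (A : Type u) [Ring A] (M : Type u) [AddCommGroup M] [Module A M] (n : ℕ) : Prop :=
  HasClassCoresolution A (fun E => IsGorensteinInjective A E) n (ModuleCat.of A M)

/-! ## Module classes `Prod(C)`, `Add(C)`, `add(C)` and (co)generators -/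

/-- `M` is a retract (equivalently, a direct summand up to isomorphism) of `P`. -/
def IsRetractOf (A : Type u) [Ring A] (M P : Type u) [AddCommGroup M] [Module A M]
    [AddCommGroup P] [Module A P] : Prop :=
  ∃ (f : M →ₗ[A] P) (g : P →ₗ[A] M), g.comp f = LinearMap.id

/-- `Prod(C)`: direct summands of direct products of copies of `C`. -/
def InProdClass (A : Type u) [Ring A] (C : Type u) [AddCommGroup C] [Module A C]
    (M : ModuleCat.{u} A) : Prop :=
  ∃ I : Type u, IsRetractOf A M (I → C)

/-- `Add(C)`: direct summands of direct sums of copies of `C`. -/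
def InAddClass (A : Type u) [Ring A] (C : Type u) [AddCommGroup C] [Module A C]
    (M : ModuleCat.{u} A) : Prop :=
  ∃ I : Type u, IsRetractOf A M (I →₀ C)

/-- `add(C)`: direct summands of finite direct sums of copies of `C`. -/
def InFinAddClass (A : Type u) [Ring A] (C : Type u) [AddCommGroup C] [Module A C]
    (M : ModuleCat.{u} A) : Prop :=
  ∃ k : ℕ, IsRetractOf A M (Fin k → C)

/-- `Q` is an injective cogenerator: `Q` is injective and every module embeds into a direct
product of copies of `Q`. -/
def IsInjectiveCogenerator (A : Type u) [Ring A] (Q : Type u) [AddCommGroup Q] [Module A Q] :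
    Prop :=
  Module.Injective A Q ∧
    ∀ (M : Type u) [AddCommGroup M] [Module A M],
      ∃ (I : Type u) (f : M →ₗ[A] (I → Q)), Function.Injective f

/-- `E` is the minimal injective cogenerator: it is an injective cogenerator which is a direct
summand of every injective cogenerator. -/
def IsMinimalInjectiveCogenerator (A : Type u) [Ring A] (E : Type u) [AddCommGroup E]
    [Module A E] : Prop :=
  IsInjectiveCogenerator A E ∧
    ∀ (Q : Type u) [AddCommGroup Q] [Module A Q],
      IsInjectiveCogenerator A Q → IsRetractOf A E Q

/-! ## Bimodules, homotheties, Wakamatsu tilting bimodules -/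

section Bimodules

variable (S R : Type u) [Ring S] [Ring R]
variable (T : Type u) [AddCommGroup T] [Module S T] [Module Rᵐᵒᵖ T] [SMulCommClass S Rᵐᵒᵖ T]

/-- The natural map `S → End(T_R)` given by the left `S`-action. -/
def leftHomothety : S → (T →ₗ[Rᵐᵒᵖ] T) := fun s =>
  { toFun := fun t => s • t
    map_add' := fun t t' => smul_add s t t'
    map_smul' := fun ρ t => smul_comm s ρ t }

/-- The natural map `R → End(_S T)` given by the right `R`-action. -/
def rightHomothety : R → (T →ₗ[S] T) := fun r =>
  { toFun := fun t => op r • t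
    map_add' := fun t t' => smul_add (op r) t t'
    map_smul' := fun s t => (smul_comm s (op r) t).symm }

/-- A Wakamatsu tilting `(S, R)`-bimodule: `T` admits resolutions by finitely generated
projectives on both sides, the natural maps `S → End(T_R)` and `R → End(_S T)` are
isomorphisms, and `Ext^i(T, T) = 0` on both sides for all `i ≥ 1`. -/
structure IsWakamatsuTilting : Prop where
  fgProjResR : HasFGProjResolution Rᵐᵒᵖ T
  fgProjResS : HasFGProjResolution S T
  bijS : Function.Bijective (leftHomothety S R T)
  bijR : Function.Bijective (rightHomothety S R T)
  extR : ExtVanishAll Rᵐᵒᵖ T T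
  extS : ExtVanishAll S T T

/-- An `(S, R)`-bimodule `T` is tensorly faithful if `T ⊗_R M = 0` implies `M = 0` and
`N ⊗_S T = 0` implies `N = 0`. -/
def IsTensorlyFaithful : Prop :=
  (∀ (M : Type u) [AddCommGroup M] [Module R M],
      Subsingleton (MTensor R T M) → Subsingleton M) ∧
  (∀ (N : Type u) [AddCommGroup N] [Module Sᵐᵒᵖ N],
      Subsingleton (MTensor S N T) → Subsingleton N)

/-- Membership in the Auslander class `𝒜_T(S)`. -/
structure InAuslanderClass (N : Type u) [AddCommGroup N] [Module Sᵐᵒᵖ N] : Prop where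
  torVanish : TorVanishAll S N T
  extVanish : ExtVanishAll Rᵐᵒᵖ T (MTensor S N T)
  thetaBij : Function.Bijective (MTensor.thetaFun S N T R)

/-- Membership in the Bass class `ℬ_T(R)`. -/
structure InBassClass (M : Type u) [AddCommGroup M] [Module Rᵐᵒᵖ M] : Prop where
  extVanish : ExtVanishAll Rᵐᵒᵖ T M
  torVanish : TorVanishAll S (T →ₗ[Rᵐᵒᵖ] M) T
  nuBij : Function.Bijective (MTensor.nuFun S R T M)

end Bimodules

/-! ## Cotilting and tilting modules -/

/-- A cotilting right `R`-module (Hügel–Coelho): finite injective dimension,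
`Ext^{i≥1}_R(Cᴵ, C) = 0` for every index set `I`, and there is a finite exact sequence
`0 → C_r → ⋯ → C_0 → Q → 0` with all `C_i ∈ Prod(C)` and `Q` an injective cogenerator. -/
structure IsCotilting (R : Type u) [Ring R] (C : Type u) [AddCommGroup C] [Module Rᵐᵒᵖ C] :
    Prop where
  finInjDim : ∃ n, InjDimLE Rᵐᵒᵖ C n
  extProdVanish : ∀ I : Type u, ExtVanishAll Rᵐᵒᵖ (I → C) C
  coresolution : ∃ (Q : ModuleCat.{u} Rᵐᵒᵖ) (r : ℕ),
    IsInjectiveCogenerator Rᵐᵒᵖ Q ∧ HasClassResolution Rᵐᵒᵖ (InProdClass Rᵐᵒᵖ C) r Q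

/-- An `n`-tilting right `R`-module (Miyashita). -/
structure IsNTilting (R : Type u) [Ring R] (T : Type u) [AddCommGroup T] [Module Rᵐᵒᵖ T]
    (n : ℕ) : Prop where
  fgProjRes : HasFGProjResolution Rᵐᵒᵖ T
  projDim : ProjDimLE Rᵐᵒᵖ T n
  extVanish : ExtVanishAll Rᵐᵒᵖ T T
  coresolution : HasClassCoresolution Rᵐᵒᵖ (InFinAddClass Rᵐᵒᵖ T) n (ModuleCat.of Rᵐᵒᵖ R)

/-- The data of a coresolution `0 → R → P 0 → P 1 → ⋯` of right `R`-modules. -/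
structure WakamatsuCoresolutionData (R : Type u) [Ring R] : Type (u + 1) where
  P : ℕ → Type u
  [instAdd : ∀ n, AddCommGroup (P n)]
  [instMod : ∀ n, Module Rᵐᵒᵖ (P n)]
  f0 : R →ₗ[Rᵐᵒᵖ] P 0
  d : ∀ n, P n →ₗ[Rᵐᵒᵖ] P (n + 1)

attribute [instance] WakamatsuCoresolutionData.instAdd WakamatsuCoresolutionData.instMod

/-- A Wakamatsu tilting right `R`-module: it admits a resolution by finitely generated
projective right `R`-modules, `Ext^{i≥1}_R(T, T) = 0`, and there is an exact sequence
`0 → R → T^0 → T^1 → ⋯` with each `T^i ∈ add(T)` and `Ext^1_R(Coker f, T) = 0` for every map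
`f` in this sequence. -/
def IsWakamatsuTiltingModule (R : Type u) [Ring R] (T : Type u) [AddCommGroup T]
    [Module Rᵐᵒᵖ T] : Prop :=
  HasFGProjResolution Rᵐᵒᵖ T ∧ ExtVanishAll Rᵐᵒᵖ T T ∧
    ∃ W : WakamatsuCoresolutionData R,
      Function.Injective W.f0 ∧ Function.Exact W.f0 (W.d 0) ∧
      (∀ n, Function.Exact (W.d n) (W.d (n + 1))) ∧
      (∀ n, InFinAddClass Rᵐᵒᵖ T (ModuleCat.of Rᵐᵒᵖ (W.P n))) ∧
      Ext1Vanishes Rᵐᵒᵖ ((W.P 0) ⧸ LinearMap.range W.f0) T ∧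
      (∀ n, Ext1Vanishes Rᵐᵒᵖ ((W.P (n + 1)) ⧸ LinearMap.range (W.d n)) T)

/-! ## Vanishing of `Ext` groups of modules -/

section ExtZero

open CategoryTheory CategoryTheory.Abelian

variable {A : Type u} [Ring A]

/-- The group `Ext^n_A(X, Y)` is zero. -/
def ExtZero (A : Type u) [Ring A] (X Y : Type u) [AddCommGroup X] [Module A X]
    [AddCommGroup Y] [Module A Y] (n : ℕ) : Prop :=
  ∀ x : Ext (ModuleCat.of A X) (ModuleCat.of A Y) n, x = 0

/-- The short exact sequence `0 → K → P → X → 0` of `A`-modules given by `f` and `g`. -/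
structure IsShortExact {K P X : Type u} [AddCommGroup K] [Module A K] [AddCommGroup P]
    [Module A P] [AddCommGroup X] [Module A X] (f : K →ₗ[A] P) (g : P →ₗ[A] X) : Prop where
  inj : Function.Injective f
  exact : Function.Exact f g
  surj : Function.Surjective g

variable {K P X Y Z : Type u} [AddCommGroup K] [Module A K] [AddCommGroup P] [Module A P]
  [AddCommGroup X] [Module A X] [AddCommGroup Y] [Module A Y] [AddCommGroup Z] [Module A Z]

theorem IsShortExact.exists_shortExact {f : K →ₗ[A] P} {g : P →ₗ[A] X}
    (h : IsShortExact f g) :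
    ∃ w, (ShortComplex.mk (ModuleCat.ofHom f) (ModuleCat.ofHom g) w).ShortExact :=
  ⟨by rw [← ModuleCat.ofHom_comp, h.exact.linearMap_comp_eq_zero]; rfl,
    ModuleCat.shortComplex_shortExact _ h.exact h.inj h.surj⟩

theorem extZero_of_projective (hX : Module.Projective A X) (n : ℕ) : ExtZero A X Y (n + 1) := by
  have : CategoryTheory.Projective (ModuleCat.of A X) := (IsProjective.iff_projective X).1 hX
  exact fun x => Ext.eq_zero_of_projective x

theorem extZero_of_injective (hY : Module.Injective A Y) (n : ℕ) : ExtZero A X Y (n + 1) := by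
  have : CategoryTheory.Injective (ModuleCat.of A Y) :=
    (Module.injective_iff_injective_object A Y).1 hY
  exact fun x => Ext.eq_zero_of_injective x

section Contravariant

variable {f : K →ₗ[A] P} {g : P →ₗ[A] X}

theorem ExtZero.contra_right (h : IsShortExact f g) {n : ℕ} (hK : ExtZero A K Y n)
    (hP : ExtZero A P Y (n + 1)) : ExtZero A X Y (n + 1) := by
  intro x
  obtain ⟨w, hw⟩ := h.exists_shortExact
  obtain ⟨y, rfl⟩ := Ext.contravariant_sequence_exact₃ hw _ x (hP _) (add_comm 1 n)
  rw [hK y, Ext.comp_zero]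

theorem ExtZero.contra_left (h : IsShortExact f g) {n : ℕ} (hP : ExtZero A P Y n)
    (hX : ExtZero A X Y (n + 1)) : ExtZero A K Y n := by
  intro x
  obtain ⟨w, hw⟩ := h.exists_shortExact
  obtain ⟨y, rfl⟩ := Ext.contravariant_sequence_exact₁ hw _ x (add_comm 1 n) (hX _)
  rw [hP y, Ext.comp_zero]

theorem ExtZero.exists_extension (h : IsShortExact f g) (hX : ExtZero A X Y 1)
    (a : K →ₗ[A] Y) : ∃ b : P →ₗ[A] Y, b.comp f = a := by
  obtain ⟨w, hw⟩ := h.exists_shortExact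
  obtain ⟨y, hy⟩ := Ext.contravariant_sequence_exact₁ hw _ (Ext.mk₀ (ModuleCat.ofHom a))
    (add_comm 1 0) (hX _)
  obtain ⟨b, rfl⟩ := (Ext.mk₀_bijective _ _).2 y
  rw [Ext.mk₀_comp_mk₀] at hy
  exact ⟨b.hom, congrArg ModuleCat.Hom.hom ((Ext.mk₀_bijective _ _).1 hy)⟩

theorem extZero_one_of_extension (h : IsShortExact f g) (hP : ExtZero A P Y 1)
    (H : ∀ a : K →ₗ[A] Y, ∃ b : P →ₗ[A] Y, b.comp f = a) : ExtZero A X Y 1 := by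
  intro x
  obtain ⟨w, hw⟩ := h.exists_shortExact
  obtain ⟨y, rfl⟩ := Ext.contravariant_sequence_exact₃ hw _ x (hP _) (add_comm 1 0)
  obtain ⟨a, rfl⟩ := (Ext.mk₀_bijective _ _).2 y
  obtain ⟨b, hb⟩ := H a.hom
  have : a = ModuleCat.ofHom f ≫ ModuleCat.ofHom b := by
    rw [← ModuleCat.ofHom_comp, hb]; rfl
  rw [this, ← Ext.mk₀_comp_mk₀, ← Ext.comp_assoc_of_second_deg_zero,
    ShortComplex.ShortExact.extClass_comp]
  simp

end Contravariant

section Covariant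

variable {f : K →ₗ[A] P} {g : P →ₗ[A] Z}

theorem ExtZero.co_left (h : IsShortExact f g) {n : ℕ} (hZ : ExtZero A X Z n)
    (hP : ExtZero A X P (n + 1)) : ExtZero A X K (n + 1) := by
  intro x
  obtain ⟨w, hw⟩ := h.exists_shortExact
  obtain ⟨y, rfl⟩ := Ext.covariant_sequence_exact₁ _ hw x (hP _) rfl
  rw [hZ y, Ext.zero_comp]

theorem ExtZero.co_right (h : IsShortExact f g) {n : ℕ} (hP : ExtZero A X P n)
    (hK : ExtZero A X K (n + 1)) : ExtZero A X Z n := by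
  intro x
  obtain ⟨w, hw⟩ := h.exists_shortExact
  obtain ⟨y, rfl⟩ := Ext.covariant_sequence_exact₃ _ hw x rfl (hK _)
  rw [hP y, Ext.zero_comp]

theorem extZero_one_of_lift (h : IsShortExact f g) (hP : ExtZero A X P 1)
    (H : ∀ a : X →ₗ[A] Z, ∃ b : X →ₗ[A] P, g.comp b = a) : ExtZero A X K 1 := by
  intro x
  obtain ⟨w, hw⟩ := h.exists_shortExact
  obtain ⟨y, rfl⟩ := Ext.covariant_sequence_exact₁ _ hw x (hP _) rfl
  obtain ⟨a, rfl⟩ := (Ext.mk₀_bijective _ _).2 y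
  obtain ⟨b, hb⟩ := H a.hom
  have : a = ModuleCat.ofHom b ≫ ModuleCat.ofHom g := by
    rw [← ModuleCat.ofHom_comp, hb]; rfl
  rw [this, ← Ext.mk₀_comp_mk₀, Ext.comp_assoc_of_second_deg_zero]
  have e : (Ext.mk₀ (ModuleCat.ofHom g)).comp hw.extClass (zero_add 1) = 0 := hw.comp_extClass
  exact (congrArg (fun z => (Ext.mk₀ (ModuleCat.ofHom b)).comp z _) e).trans (Ext.comp_zero ..)

end Covariant

end ExtZero

theorem isShortExact_ker {A : Type u} [Ring A] {P X : Type u} [AddCommGroup P] [Module A P]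
    [AddCommGroup X] [Module A X] (g : P →ₗ[A] X) (hg : Function.Surjective g) :
    IsShortExact (LinearMap.ker g).subtype g :=
  ⟨Subtype.val_injective, LinearMap.exact_subtype_ker_map g, hg⟩

/-! ## Projective resolutions -/

section Resolutions

variable {A : Type u} [Ring A] {X : Type u} [AddCommGroup X] [Module A X]

/-- The resolution of the first syzygy obtained by truncating a resolution. -/
def ResolutionData.shift (Q : ResolutionData A X) (h : Function.Exact (Q.d 0) Q.ε) :
    ResolutionData A (LinearMap.ker Q.ε) where
  P n := Q.P (n + 1)
  d n := Q.d (n + 1)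
  ε := (Q.d 0).codRestrict _ fun x => h.apply_apply_eq_zero x

theorem ResolutionData.IsProjResolution.shift {Q : ResolutionData A X}
    (h : Q.IsProjResolution) : (Q.shift h.exact0).IsProjResolution where
  proj n := h.proj (n + 1)
  surj := by
    rintro ⟨x, hx⟩
    obtain ⟨y, rfl⟩ := (h.exact0 x).1 hx
    exact ⟨y, rfl⟩
  exact0 x := by
    exact Subtype.ext_iff.trans (h.exactSucc 0 x)
  exactSucc n := h.exactSucc (n + 1)

theorem ResolutionData.IsProjResolution.exact_iff_extZero {Q : ResolutionData A X}
    (h : Q.IsProjResolution) (Y : Type u) [AddCommGroup Y] [Module A Y] (j : ℕ) :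
    Function.Exact
      (fun f : Q.P j →ₗ[A] Y => f.comp (Q.d j))
      (fun f : Q.P (j + 1) →ₗ[A] Y => f.comp (Q.d (j + 1))) ↔ ExtZero A X Y (j + 1) := by
  induction j generalizing X with
  | zero =>
    have hs := isShortExact_ker Q.ε h.surj
    let p : Q.P 1 →ₗ[A] LinearMap.ker Q.ε := (Q.shift h.exact0).ε
    have hp : Function.Surjective p := h.shift.surj
    have hdp : Function.Exact (Q.d 1) p := h.shift.exact0
    constructor
    · intro H
      refine extZero_one_of_extension hs (extZero_of_projective (h.proj 0) 0) fun a => ?_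
      obtain ⟨b, hb⟩ := (H (a.comp p)).1
        (LinearMap.ext fun x => by
          show a (p (Q.d 1 x)) = 0
          rw [hdp.apply_apply_eq_zero, map_zero])
      refine ⟨b, LinearMap.ext fun x => ?_⟩
      obtain ⟨y, rfl⟩ := hp x
      exact LinearMap.congr_fun hb y
    · intro H c
      constructor
      · intro hcz
        have hker : LinearMap.ker p ≤ LinearMap.ker c := by
          intro x hx
          obtain ⟨y, rfl⟩ := (hdp x).1 hx
          exact LinearMap.congr_fun hcz y
        let e := p.quotKerEquivOfSurjective hp
        obtain ⟨b, hb⟩ := H.exists_extension hs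
          (((LinearMap.ker p).liftQ c hker).comp e.symm.toLinearMap)
        refine ⟨b, LinearMap.ext fun x => ?_⟩
        have hx : e.symm (p x) = Submodule.Quotient.mk x := by
          rw [LinearEquiv.symm_apply_eq]; rfl
        refine (LinearMap.congr_fun hb (p x)).trans ?_
        show (LinearMap.ker p).liftQ c hker (e.symm (p x)) = c x
        rw [hx]
        rfl
      · rintro ⟨b, rfl⟩
        refine LinearMap.ext fun x => ?_
        show b (Q.d 0 (Q.d 1 x)) = 0
        rw [(h.exactSucc 0).apply_apply_eq_zero, map_zero]
  | succ j ih =>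
    have hs := isShortExact_ker Q.ε h.surj
    refine (ih h.shift).trans ⟨fun H => ?_, fun H => ?_⟩
    · exact H.contra_right hs (extZero_of_projective (h.proj 0) _)
    · exact ExtZero.contra_left hs (extZero_of_projective (h.proj 0) _) H

theorem ExtVanishAll.extZero {Y : Type u} [AddCommGroup Y] [Module A Y]
    (h : ExtVanishAll A X Y) (j : ℕ) : ExtZero A X Y (j + 1) := by
  obtain ⟨Q, hQ, H⟩ := h
  exact (hQ.exact_iff_extZero Y j).1 (H j)

/-- The iterated syzygies of a module with respect to the canonical free covers. -/
def freeSyzygy (A : Type u) [Ring A] (X : ModuleCat.{u} A) : ℕ → ModuleCat.{u} A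
  | 0 => X
  | n + 1 => ModuleCat.of A
      (LinearMap.ker (Finsupp.linearCombination A (id : freeSyzygy A X n → freeSyzygy A X n)))

theorem exists_isProjResolution (A : Type u) [Ring A] (X : Type u) [AddCommGroup X]
    [Module A X] : ∃ Q : ResolutionData A X, Q.IsProjResolution := by
  let W := freeSyzygy A (ModuleCat.of A X)
  let p : ∀ n, (W n →₀ A) →ₗ[A] W n := fun n => Finsupp.linearCombination A id
  have hp : ∀ n, Function.Surjective (p n) := fun n =>
    Finsupp.linearCombination_id_surjective A (W n)
  let i : ∀ n, W (n + 1) →ₗ[A] (W n →₀ A) := fun n => (LinearMap.ker (p n)).subtype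
  have hi : ∀ n, Function.Injective (i n) := fun n => Subtype.val_injective
  have hip : ∀ n, Function.Exact (i n) (p n) := fun n => LinearMap.exact_subtype_ker_map _
  have key : ∀ n, Function.Exact ((i n).comp (p (n + 1))) (p n) := fun n x => by
    rw [hip n x]
    constructor
    · rintro ⟨y, rfl⟩
      obtain ⟨z, rfl⟩ := hp (n + 1) y
      exact ⟨z, rfl⟩
    · rintro ⟨z, rfl⟩
      exact ⟨p (n + 1) z, rfl⟩
  refine ⟨⟨fun n => W n →₀ A, fun n => (i n).comp (p (n + 1)), p 0⟩, ⟨fun n => ?_, hp 0, key 0,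
    fun n x => ?_⟩⟩
  · dsimp only; infer_instance
  · rw [← key (n + 1) x]
    exact map_eq_zero_iff (i n) (hi n)

end Resolutions

/-! ## Characters of abelian groups -/

section Characters

variable {A B C : Type u} [AddCommGroup A] [AddCommGroup B] [AddCommGroup C]

theorem eq_zero_of_forall_character {a : A} (h : ∀ c : A →+ AddCircle (1 : ℚ), c a = 0) :
    a = 0 :=
  CharacterModule.eq_zero_of_character_apply h

theorem exists_character_extension {g : A →+ B} (hg : Function.Injective g)
    (c : A →+ AddCircle (1 : ℚ)) : ∃ c' : B →+ AddCircle (1 : ℚ), ∀ a, c' (g a) = c a := by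
  obtain ⟨c', hc'⟩ := CharacterModule.dual_surjective_of_injective g.toIntLinearMap hg c
  exact ⟨c', fun a => DFunLike.congr_fun hc' a⟩

theorem exists_character_factor {f : A →+ B} {g : B →+ C} (h : Function.Exact f g)
    (c : B →+ AddCircle (1 : ℚ)) (hc : ∀ a, c (f a) = 0) :
    ∃ c' : C →+ AddCircle (1 : ℚ), ∀ b, c' (g b) = c b := by
  have hker : g.ker ≤ c.ker := by
    intro b hb
    obtain ⟨a, rfl⟩ := (h b).1 hb
    exact hc a
  obtain ⟨c', hc'⟩ := exists_character_extension (QuotientAddGroup.kerLift_injective g)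
    (QuotientAddGroup.lift g.ker c hker)
  exact ⟨c', fun b => hc' (QuotientAddGroup.mk b)⟩

theorem exact_of_character {f : A →+ B} {g : B →+ C} (hgf : ∀ a, g (f a) = 0)
    (h : ∀ c : B →+ AddCircle (1 : ℚ), (∀ a, c (f a) = 0) →
      ∃ c' : C →+ AddCircle (1 : ℚ), ∀ b, c' (g b) = c b) : Function.Exact f g := by
  intro b
  refine ⟨fun hb => ?_, ?_⟩
  · have hb : (QuotientAddGroup.mk b : B ⧸ f.range) = 0 := by
      refine eq_zero_of_forall_character fun c => ?_
      obtain ⟨c', hc'⟩ := h (c.comp (QuotientAddGroup.mk' f.range)) fun a => by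
        have : (QuotientAddGroup.mk (f a) : B ⧸ f.range) = 0 :=
          (QuotientAddGroup.eq_zero_iff _).2 ⟨a, rfl⟩
        exact (congrArg c this).trans c.map_zero
      refine (hc' b).symm.trans ?_
      rw [hb, map_zero]
    exact (QuotientAddGroup.eq_zero_iff b).1 hb
  · rintro ⟨a, rfl⟩
    exact hgf a

theorem injective_of_character {g : A →+ B}
    (h : ∀ c : A →+ AddCircle (1 : ℚ), ∃ c' : B →+ AddCircle (1 : ℚ), ∀ a, c' (g a) = c a) :
    Function.Injective g := by
  refine (injective_iff_map_eq_zero g).2 fun a ha => eq_zero_of_forall_character fun c => ?_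
  obtain ⟨c', hc'⟩ := h c
  rw [← hc', ha, map_zero]

end Characters

/-! ## The character module of a left module -/

section DualModule

/-- The character group of a left `S`-module. -/
def DualModule (S : Type u) [Ring S] (X : Type u) [AddCommGroup X] [Module S X] : Type u :=
  X →+ AddCircle (1 : ℚ)

variable (S : Type u) [Ring S]
variable {X Y Z : Type u} [AddCommGroup X] [Module S X] [AddCommGroup Y] [Module S Y]
  [AddCommGroup Z] [Module S Z]

instance : AddCommGroup (DualModule S X) :=
  inferInstanceAs (AddCommGroup (X →+ AddCircle (1 : ℚ)))

instance : FunLike (DualModule S X) X (AddCircle (1 : ℚ)) :=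
  inferInstanceAs (FunLike (X →+ AddCircle (1 : ℚ)) X (AddCircle (1 : ℚ)))

instance : AddMonoidHomClass (DualModule S X) X (AddCircle (1 : ℚ)) :=
  inferInstanceAs (AddMonoidHomClass (X →+ AddCircle (1 : ℚ)) X (AddCircle (1 : ℚ)))

variable {S}

@[ext] theorem DualModule.ext {c c' : DualModule S X} (h : ∀ x, c x = c' x) : c = c' :=
  DFunLike.ext _ _ h

@[simp] theorem DualModule.add_apply (c c' : DualModule S X) (x : X) :
    (c + c') x = c x + c' x := rfl

@[simp] theorem DualModule.zero_apply (x : X) : (0 : DualModule S X) x = 0 := rfl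

instance : SMul Sᵐᵒᵖ (DualModule S X) :=
  ⟨fun b c => AddMonoidHom.comp (show X →+ AddCircle (1 : ℚ) from c)
    (DistribSMul.toAddMonoidHom X b.unop)⟩

@[simp] theorem DualModule.smul_apply (b : Sᵐᵒᵖ) (c : DualModule S X) (x : X) :
    (b • c) x = c (b.unop • x) := rfl

instance : Module Sᵐᵒᵖ (DualModule S X) where
  one_smul c := by ext; simp
  mul_smul a b c := by ext; simp [mul_smul]
  smul_zero b := by ext; simp
  smul_add b c c' := by ext; simp
  add_smul a b c := by ext; simp [add_smul]
  zero_smul c := by ext; simp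

/-- The right linear map on character modules induced by a left linear map. -/
def DualModule.map (g : X →ₗ[S] Y) : DualModule S Y →ₗ[Sᵐᵒᵖ] DualModule S X where
  toFun c := AddMonoidHom.comp (show Y →+ AddCircle (1 : ℚ) from c) g.toAddMonoidHom
  map_add' c c' := rfl
  map_smul' b c := DualModule.ext fun x => by
    exact congrArg c (g.map_smul b.unop x).symm

@[simp] theorem DualModule.map_apply (g : X →ₗ[S] Y) (c : DualModule S Y) (x : X) :
    DualModule.map g c x = c (g x) := rfl

theorem DualModule.isShortExact {f : X →ₗ[S] Y} {g : Y →ₗ[S] Z} (h : IsShortExact f g) :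
    IsShortExact (DualModule.map g) (DualModule.map f) where
  inj := by
    refine (injective_iff_map_eq_zero _).2 fun c hc => DualModule.ext fun z => ?_
    obtain ⟨y, rfl⟩ := h.surj z
    exact DFunLike.congr_fun hc y
  exact c := by
    constructor
    · intro hc
      obtain ⟨c', hc'⟩ := exists_character_factor (f := f.toAddMonoidHom)
        (g := g.toAddMonoidHom) h.exact c fun a => DFunLike.congr_fun hc a
      exact ⟨c', DualModule.ext hc'⟩
    · rintro ⟨c', rfl⟩
      ext x
      simp [h.exact.apply_apply_eq_zero]
  surj c := by
    obtain ⟨c', hc'⟩ := exists_character_extension (g := f.toAddMonoidHom) h.inj c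
    exact ⟨c', DualModule.ext hc'⟩

end DualModule

/-! ## Basic properties of the tensor product -/

namespace MTensor

section Lift

variable {S : Type u} [Ring S]
variable {N : Type u} [AddCommGroup N] [Module Sᵐᵒᵖ N]
variable {T : Type u} [AddCommGroup T] [Module S T]

theorem mk_add_left (n n' : N) (t : T) :
    (mk (n + n') t : MTensor S N T) = mk n t + mk n' t := by
  show QuotientAddGroup.mk _ = _
  rw [TensorProduct.tmul_add]
  rfl

theorem mk_add (n : N) (t t' : T) : (mk n (t + t') : MTensor S N T) = mk n t + mk n t' := by
  show QuotientAddGroup.mk _ = _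
  rw [TensorProduct.add_tmul]
  rfl

theorem mk_smul (s : S) (n : N) (t : T) :
    (mk (op s • n) t : MTensor S N T) = mk n (s • t) := by
  refine (QuotientAddGroup.eq_iff_sub_mem.2 ?_).symm
  exact AddSubgroup.subset_closure ⟨s, t, n, rfl⟩

/-- The balanced pairing `N × T → N ⊗_S T` as a biadditive map. -/
def mkHom (S : Type u) [Ring S] (N : Type u) [AddCommGroup N] [Module Sᵐᵒᵖ N]
    (T : Type u) [AddCommGroup T] [Module S T] : N →+ T →+ MTensor S N T :=
  AddMonoidHom.mk' (fun n => AddMonoidHom.mk' (mk n) (mk_add n))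
    fun n n' => AddMonoidHom.ext fun t => mk_add_left n n' t

theorem mkHom_apply (n : N) (t : T) : mkHom S N T n t = mk n t := rfl

/-- The additive map out of `N ⊗_S T` induced by a balanced biadditive map. -/
def lift {A : Type*} [AddCommGroup A] (f : N →+ T →+ A)
    (hf : ∀ (s : S) n t, f (op s • n) t = f n (s • t)) : MTensor S N T →+ A :=
  QuotientAddGroup.lift _
    (TensorProduct.liftAddHom f.flip fun z t n => by simp)
    (by
      refine (AddSubgroup.closure_le _).2 ?_
      rintro x ⟨s, t, n, rfl⟩
      simp [hf])

theorem induction_on {p : MTensor S N T → Prop} (x : MTensor S N T)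
    (h_zero : p 0) (h_mk : ∀ n t, p (mk n t)) (h_add : ∀ x y, p x → p y → p (x + y)) : p x := by
  obtain ⟨x, rfl⟩ := QuotientAddGroup.mk_surjective x
  induction x using TensorProduct.induction_on with
  | zero => exact h_zero
  | tmul t n => exact h_mk n t
  | add x y hx hy => exact h_add _ _ hx hy

theorem addHom_ext {A : Type*} [AddCommGroup A] {f g : MTensor S N T →+ A}
    (h : ∀ n t, f (mk n t) = g (mk n t)) : f = g := by
  ext x
  induction x using induction_on with
  | h_zero => simp
  | h_mk n t => exact h n t
  | h_add x y hx hy => simp [hx, hy]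

@[simp] theorem map_mk {N' : Type u} [AddCommGroup N'] [Module Sᵐᵒᵖ N'] (g : N →ₗ[Sᵐᵒᵖ] N')
    (n : N) (t : T) : map g (mk n t : MTensor S N T) = mk (g n) t := rfl

@[simp] theorem lmap_mk {T' : Type u} [AddCommGroup T'] [Module S T'] (g : T →ₗ[S] T')
    (n : N) (t : T) : lmap g (mk n t : MTensor S N T) = mk n (g t) := rfl

end Lift

section Adjunction

variable {S : Type u} [Ring S]
variable {N N' N'' : Type u} [AddCommGroup N] [Module Sᵐᵒᵖ N] [AddCommGroup N'] [Module Sᵐᵒᵖ N']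
  [AddCommGroup N''] [Module Sᵐᵒᵖ N'']
variable {X Y Z : Type u} [AddCommGroup X] [Module S X] [AddCommGroup Y] [Module S Y]
  [AddCommGroup Z] [Module S Z]

/-- The right linear map `N → X⁺` corresponding to a character of `N ⊗_S X`. -/
def curry (c : MTensor S N X →+ AddCircle (1 : ℚ)) : N →ₗ[Sᵐᵒᵖ] DualModule S X where
  toFun n := c.comp (mkHom S N X n)
  map_add' n n' := DualModule.ext fun x => by
    show c (mk (n + n') x) = c (mk n x) + c (mk n' x)
    rw [mk_add_left, map_add]
  map_smul' b n := DualModule.ext fun x => by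
    show c (mk (op b.unop • n) x) = c (mk n (b.unop • x))
    rw [mk_smul]

/-- The character of `N ⊗_S X` corresponding to a right linear map `N → X⁺`. -/
def uncurry (a : N →ₗ[Sᵐᵒᵖ] DualModule S X) : MTensor S N X →+ AddCircle (1 : ℚ) :=
  lift a.toAddMonoidHom fun s n x => by
    show a (op s • n) x = a n (s • x)
    rw [map_smul]
    rfl

theorem map_comp_apply (g : N →ₗ[Sᵐᵒᵖ] N') (g' : N' →ₗ[Sᵐᵒᵖ] N'') (x : MTensor S N X) :
    map g' (map g x) = map (g'.comp g) x :=
  DFunLike.congr_fun (f := (map (T := X) g').comp (map g)) (g := map (g'.comp g))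
    (addHom_ext fun _ _ => rfl) x

theorem lmap_comp_apply (g : X →ₗ[S] Y) (g' : Y →ₗ[S] Z) (x : MTensor S N X) :
    lmap g' (lmap g x) = lmap (g'.comp g) x :=
  DFunLike.congr_fun (f := (lmap (N := N) g').comp (lmap g)) (g := lmap (g'.comp g))
    (addHom_ext fun _ _ => rfl) x

theorem mk_zero_left (x : X) : (mk 0 x : MTensor S N X) = 0 :=
  DFunLike.congr_fun (map_zero (mkHom S N X)) x

theorem mk_zero_right (n : N) : (mk n 0 : MTensor S N X) = 0 :=
  map_zero (mkHom S N X n)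

theorem map_zero_apply (x : MTensor S N X) : map (0 : N →ₗ[Sᵐᵒᵖ] N') x = 0 :=
  DFunLike.congr_fun (addHom_ext (g := 0) fun _ x => mk_zero_left x) x

theorem lmap_zero_apply (x : MTensor S N X) : lmap (0 : X →ₗ[S] Y) x = 0 :=
  DFunLike.congr_fun (addHom_ext (g := 0) fun n _ => mk_zero_right n) x

theorem map_exact_iff {f : N →ₗ[Sᵐᵒᵖ] N'} {g : N' →ₗ[Sᵐᵒᵖ] N''} (hgf : g.comp f = 0) :
    Function.Exact (map (T := X) f) (map (T := X) g) ↔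
      ∀ a : N' →ₗ[Sᵐᵒᵖ] DualModule S X, a.comp f = 0 →
        ∃ b : N'' →ₗ[Sᵐᵒᵖ] DualModule S X, b.comp g = a := by
  constructor
  · intro h a ha
    obtain ⟨c, hc⟩ := exists_character_factor h (uncurry a) fun x =>
      DFunLike.congr_fun (addHom_ext (f := (uncurry a).comp (map f)) (g := 0) fun n x =>
        DFunLike.congr_fun (LinearMap.congr_fun ha n) x) x
    exact ⟨curry c, LinearMap.ext fun n => DualModule.ext fun x => hc (mk n x)⟩
  · intro h
    refine exact_of_character (fun x => by rw [map_comp_apply, hgf, map_zero_apply])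
      fun c hc => ?_
    obtain ⟨b, hb⟩ := h (curry c) (LinearMap.ext fun n => DualModule.ext fun x => hc (mk n x))
    exact ⟨uncurry b, fun x => DFunLike.congr_fun (addHom_ext (f := (uncurry b).comp (map g))
      fun n x => DFunLike.congr_fun (LinearMap.congr_fun hb n) x) x⟩

theorem map_injective_iff {f : N →ₗ[Sᵐᵒᵖ] N'} :
    Function.Injective (map (T := X) f) ↔
      ∀ a : N →ₗ[Sᵐᵒᵖ] DualModule S X, ∃ b : N' →ₗ[Sᵐᵒᵖ] DualModule S X, b.comp f = a := by
  constructor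
  · intro h a
    obtain ⟨c, hc⟩ := exists_character_extension h (uncurry a)
    exact ⟨curry c, LinearMap.ext fun n => DualModule.ext fun x => hc (mk n x)⟩
  · intro h
    refine injective_of_character fun c => ?_
    obtain ⟨b, hb⟩ := h (curry c)
    exact ⟨uncurry b, fun x => DFunLike.congr_fun (addHom_ext (f := (uncurry b).comp (map f))
      fun n x => DFunLike.congr_fun (LinearMap.congr_fun hb n) x) x⟩

theorem map_surjective {g : N →ₗ[Sᵐᵒᵖ] N'} (hg : Function.Surjective g) :
    Function.Surjective (map (T := X) g) := by
  intro y
  induction y using induction_on with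
  | h_zero => exact ⟨0, map_zero _⟩
  | h_mk n x =>
    obtain ⟨m, rfl⟩ := hg n
    exact ⟨mk m x, rfl⟩
  | h_add y y' hy hy' =>
    obtain ⟨x, rfl⟩ := hy
    obtain ⟨x', rfl⟩ := hy'
    exact ⟨x + x', map_add _ _ _⟩

theorem map_exact {f : N →ₗ[Sᵐᵒᵖ] N'} {g : N' →ₗ[Sᵐᵒᵖ] N''} (h : Function.Exact f g)
    (hg : Function.Surjective g) : Function.Exact (map (T := X) f) (map (T := X) g) := by
  refine (map_exact_iff h.linearMap_comp_eq_zero).2 fun a ha => ?_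
  have hker : LinearMap.ker g ≤ LinearMap.ker a := by
    intro x hx
    obtain ⟨y, rfl⟩ := (h x).1 hx
    exact LinearMap.congr_fun ha y
  let e := g.quotKerEquivOfSurjective hg
  refine ⟨((LinearMap.ker g).liftQ a hker).comp e.symm.toLinearMap, LinearMap.ext fun x => ?_⟩
  have hx : e.symm (g x) = Submodule.Quotient.mk x := by
    rw [LinearEquiv.symm_apply_eq]; rfl
  show (LinearMap.ker g).liftQ a hker (e.symm (g x)) = a x
  rw [hx]
  rfl

theorem lmap_exact {f : X →ₗ[S] Y} {g : Y →ₗ[S] Z} (h : Function.Exact f g)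
    (hg : Function.Surjective g) : Function.Exact (lmap (N := N) f) (lmap (N := N) g) := by
  refine exact_of_character (fun x => by
    rw [lmap_comp_apply, h.linearMap_comp_eq_zero, lmap_zero_apply]) fun c hc => ?_
  have key : ∀ n, ∃ a : Z →+ AddCircle (1 : ℚ), ∀ y, a (g y) = c (mk n y) := fun n =>
    exists_character_factor (f := f.toAddMonoidHom) (g := g.toAddMonoidHom) h
      (c.comp (mkHom S N Y n)) fun x => hc (mk n x)
  choose a ha using key
  let b : N →ₗ[Sᵐᵒᵖ] DualModule S Z :=
    { toFun := a
      map_add' := fun n n' => DualModule.ext fun z => by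
        obtain ⟨y, rfl⟩ := hg z
        show a (n + n') (g y) = a n (g y) + a n' (g y)
        rw [ha, ha, ha, mk_add_left, map_add]
      map_smul' := fun s n => DualModule.ext fun z => by
        obtain ⟨y, rfl⟩ := hg z
        show a (op s.unop • n) (g y) = a n (s.unop • g y)
        rw [ha, ← map_smul, ha, mk_smul] }
  exact ⟨uncurry b, fun x => DFunLike.congr_fun (addHom_ext (f := (uncurry b).comp (lmap g))
    fun n y => ha n y) x⟩

end Adjunction

end MTensor

section Flat

variable {S : Type u} [Ring S]
variable {N : Type u} [AddCommGroup N] [Module Sᵐᵒᵖ N]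
variable {X Y Z : Type u} [AddCommGroup X] [Module S X] [AddCommGroup Y] [Module S Y]
  [AddCommGroup Z] [Module S Z]

theorem IsFlatRightModule.lmap_exact (hN : IsFlatRightModule S N) {f : X →ₗ[S] Y}
    {g : Y →ₗ[S] Z} (h : Function.Exact f g) :
    Function.Exact (MTensor.lmap (N := N) f) (MTensor.lmap (N := N) g) := by
  have hr : Function.Exact f g.rangeRestrict := fun y => by
    rw [← h y]
    exact Subtype.ext_iff
  have hi := hN _ _ (LinearMap.range g).subtype Subtype.val_injective
  intro y
  rw [← MTensor.lmap_exact hr g.surjective_rangeRestrict y]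
  have : MTensor.lmap (N := N) g y =
      MTensor.lmap (LinearMap.range g).subtype (MTensor.lmap g.rangeRestrict y) := by
    rw [MTensor.lmap_comp_apply]
    rfl
  rw [this]
  exact map_eq_zero_iff _ hi

theorem IsFlatRightModule.exists_dual_lift (hN : IsFlatRightModule S N) {g : X →ₗ[S] Y}
    (hg : Function.Injective g) (a : N →ₗ[Sᵐᵒᵖ] DualModule S X) :
    ∃ b : N →ₗ[Sᵐᵒᵖ] DualModule S Y, (DualModule.map g).comp b = a := by
  obtain ⟨c, hc⟩ := exists_character_extension (hN _ _ g hg) (MTensor.uncurry a)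
  exact ⟨MTensor.curry c, LinearMap.ext fun n => DualModule.ext fun x => hc (MTensor.mk n x)⟩

theorem MTensor.map_injective_of_projective (hX : Module.Projective S X) {N' : Type u}
    [AddCommGroup N'] [Module Sᵐᵒᵖ N'] {f : N →ₗ[Sᵐᵒᵖ] N'} (hf : Function.Injective f) :
    Function.Injective (MTensor.map (T := X) f) := by
  obtain ⟨s, hs⟩ := Module.projective_def.1 hX
  let κ : ∀ (M : Type u) [AddCommGroup M] [Module Sᵐᵒᵖ M], MTensor S M X →+ (X →₀ M) :=
    fun M _ _ => MTensor.lift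
      (AddMonoidHom.mk' (fun m => AddMonoidHom.mk'
          (fun x => (s x).mapRange (fun r => op r • m) (by simp))
          fun x y => by ext; simp [add_smul])
        fun m m' => by ext; simp)
      fun r m x => by ext; simp [mul_smul]
  let ρ : (X →₀ N) →+ MTensor S N X :=
    Finsupp.liftAddHom fun x => (MTensor.mkHom S N X).flip x
  have hρ : ∀ z, ρ (κ N z) = z := by
    refine DFunLike.congr_fun (f := ρ.comp (κ N)) (g := AddMonoidHom.id _)
      (MTensor.addHom_ext fun n x => ?_)
    show ρ ((s x).mapRange (fun r => op r • n) (by simp)) = MTensor.mk n x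
    have h1 : ρ ((s x).mapRange (fun r => op r • n) (by simp)) =
        (s x).sum fun y r => MTensor.mkHom S N X n (r • y) := by
      rw [Finsupp.liftAddHom_apply, Finsupp.sum_mapRange_index (by simp)]
      exact Finsupp.sum_congr fun y _ => MTensor.mk_smul _ _ _
    rw [h1, Finsupp.sum, ← map_sum]
    refine congrArg (MTensor.mk n) ?_
    exact (Finsupp.linearCombination_apply S (s x)).symm.trans (hs x)
  have hκ : ∀ z, κ N' (MTensor.map f z) = (κ N z).mapRange f (map_zero f) := by
    refine DFunLike.congr_fun (f := (κ N').comp (MTensor.map f))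
      (g := (Finsupp.mapRange.addMonoidHom f.toAddMonoidHom).comp (κ N))
      (MTensor.addHom_ext fun n x => ?_)
    ext y
    show op (s x y) • f n = f (op (s x y) • n)
    rw [map_smul]
  refine (injective_iff_map_eq_zero _).2 fun z hz => ?_
  have h0 : (κ N z).mapRange f (map_zero f) = 0 := by rw [← hκ, hz, map_zero]
  have h1 : κ N z = 0 := by
    ext y
    exact hf ((DFunLike.congr_fun h0 y).trans (map_zero f).symm)
  rw [← hρ z, h1, map_zero]

theorem DualModule.injective_of_projective (hX : Module.Projective S X) :
    Module.Injective Sᵐᵒᵖ (DualModule S X) where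
  out _ _ _ _ _ _ f hf a := by
    obtain ⟨b, hb⟩ := MTensor.map_injective_iff.1 (MTensor.map_injective_of_projective hX hf) a
    exact ⟨b, LinearMap.congr_fun hb⟩

end Flat

/-! ## Exact complexes of flat modules and tensor products -/

section FlatComplexes

variable {S : Type u} [Ring S]

theorem IsFlatRightModule.extZero_dual {N : Type u} [AddCommGroup N] [Module Sᵐᵒᵖ N]
    (hN : IsFlatRightModule S N) (X : Type u) [AddCommGroup X] [Module S X] (i : ℕ) :
    ExtZero Sᵐᵒᵖ N (DualModule S X) (i + 1) := by
  induction i generalizing X with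
  | zero =>
    have h := isShortExact_ker _ (Finsupp.linearCombination_id_surjective S X)
    exact extZero_one_of_lift (DualModule.isShortExact h)
      (extZero_of_injective (DualModule.injective_of_projective inferInstance) 0)
      (hN.exists_dual_lift h.inj)
  | succ i ih =>
    have h := isShortExact_ker _ (Finsupp.linearCombination_id_surjective S X)
    exact (ih _).co_left (DualModule.isShortExact h)
      (extZero_of_injective (DualModule.injective_of_projective inferInstance) _)

/-- The corestriction of a differential of an exact complex to the next kernel. -/
def ZComplex.IsExact.toKer {A : Type u} [Ring A] {C : ZComplex A} (h : C.IsExact) (j : ℤ) :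
    C.P j →ₗ[A] LinearMap.ker (C.d (j + 1)) :=
  (C.d j).codRestrict _ fun x => (h j).apply_apply_eq_zero x

theorem ZComplex.IsExact.isShortExact {A : Type u} [Ring A] {C : ZComplex A} (h : C.IsExact)
    (j : ℤ) : IsShortExact (LinearMap.ker (C.d j)).subtype (h.toKer j) where
  inj := Subtype.val_injective
  exact x := by
    rw [← LinearMap.exact_subtype_ker_map (C.d j) x]
    exact Subtype.ext_iff
  surj := by
    rintro ⟨x, hx⟩
    obtain ⟨y, rfl⟩ := (h j x).1 hx
    exact ⟨y, rfl⟩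

variable {C : ZComplex Sᵐᵒᵖ}

theorem ZComplex.IsExact.extZero_ker_iff (h : C.IsExact)
    (hF : ∀ i, IsFlatRightModule S (C.P i)) (X : Type u) [AddCommGroup X] [Module S X]
    (j : ℤ) (n : ℕ) :
    ExtZero Sᵐᵒᵖ (LinearMap.ker (C.d (j + 1))) (DualModule S X) (n + 1 + 1) ↔
      ExtZero Sᵐᵒᵖ (LinearMap.ker (C.d j)) (DualModule S X) (n + 1) :=
  ⟨fun H => ExtZero.contra_left (h.isShortExact j) ((hF j).extZero_dual X n) H,
    fun H => H.contra_right (h.isShortExact j) ((hF j).extZero_dual X (n + 1))⟩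

theorem ZComplex.IsExact.extZero_dual_of_tensor_exact (h : C.IsExact)
    (hF : ∀ i, IsFlatRightModule S (C.P i)) (X : Type u) [AddCommGroup X] [Module S X]
    (hX : ∀ i, Function.Exact (⇑(MTensor.map (T := X) (C.d i)))
      (⇑(MTensor.map (T := X) (C.d (i + 1))))) (i : ℕ) (j : ℤ) :
    ExtZero Sᵐᵒᵖ (LinearMap.ker (C.d j)) (DualModule S X) (i + 1) := by
  induction i generalizing j with
  | zero =>
    obtain ⟨k, rfl⟩ : ∃ k, j = k + 1 + 1 + 1 := ⟨j - 1 - 1 - 1, by ring⟩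
    refine extZero_one_of_extension (h.isShortExact (k + 1 + 1)) ((hF _).extZero_dual X 0)
      fun a => ?_
    obtain ⟨b, hb⟩ := (MTensor.map_exact_iff (h k).linearMap_comp_eq_zero).1 (hX k)
      (a.comp (h.toKer (k + 1))) (by
        refine LinearMap.ext fun x => ?_
        show a (h.toKer (k + 1) (C.d k x)) = 0
        rw [show h.toKer (k + 1) (C.d k x) = 0 from
          Subtype.ext ((h k).apply_apply_eq_zero x), map_zero])
    refine ⟨b, LinearMap.ext fun x => ?_⟩
    obtain ⟨y, rfl⟩ := (h.isShortExact (k + 1)).surj x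
    exact LinearMap.congr_fun hb y
  | succ i ih =>
    obtain ⟨k, rfl⟩ : ∃ k, j = k + 1 := ⟨j - 1, by ring⟩
    exact (h.extZero_ker_iff hF X k i).2 (ih k)

theorem ZComplex.IsExact.extZero_dual_of_projDimLE (h : C.IsExact)
    (hF : ∀ i, IsFlatRightModule S (C.P i)) (n : ℕ) (M : ModuleCat.{u} S)
    (hM : HasClassResolution S (fun P => Module.Projective S P) n M) (i : ℕ) (j : ℤ) :
    ExtZero Sᵐᵒᵖ (LinearMap.ker (C.d j)) (DualModule S M) (i + 1) := by
  induction n generalizing M i j with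
  | zero => exact extZero_of_injective (DualModule.injective_of_projective hM) i
  | succ n ih =>
    obtain ⟨e, he, hk⟩ := hM
    have hs := DualModule.isShortExact (isShortExact_ker e.f e.surj)
    refine (h.extZero_ker_iff hF M j i).1 ?_
    exact (ih _ hk i (j + 1)).co_left hs
      (extZero_of_injective (DualModule.injective_of_projective he) _)

theorem ZComplex.IsExact.extZero_dual_of_injDimLE (h : C.IsExact)
    (hF : ∀ i, IsFlatRightModule S (C.P i))
    (hI : ∀ (I : Type u) [AddCommGroup I] [Module S I], Module.Injective S I →
      ∀ i, Function.Exact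
        (⇑(MTensor.map (T := I) (C.d i)))
        (⇑(MTensor.map (T := I) (C.d (i + 1)))))
    (n : ℕ) (M : ModuleCat.{u} S)
    (hM : HasClassCoresolution S (fun E => Module.Injective S E) n M) (i : ℕ) (j : ℤ) :
    ExtZero Sᵐᵒᵖ (LinearMap.ker (C.d j)) (DualModule S M) (i + 1) := by
  induction n generalizing M i j with
  | zero => exact h.extZero_dual_of_tensor_exact hF M (hI M hM) i j
  | succ n ih =>
    obtain ⟨m, hm, hc⟩ := hM
    have hs : IsShortExact m.f (LinearMap.range m.f).mkQ :=
      ⟨m.inj, LinearMap.exact_map_mkQ_range m.f, Submodule.mkQ_surjective _⟩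
    exact ExtZero.co_right (DualModule.isShortExact hs)
      (h.extZero_dual_of_tensor_exact hF m.E (hI m.E hm) i j) (ih _ hc (i + 1) j)

theorem torVanishAll_of_extZero_dual {N : Type u} [AddCommGroup N] [Module Sᵐᵒᵖ N]
    {T : Type u} [AddCommGroup T] [Module S T]
    (h : ∀ i, ExtZero Sᵐᵒᵖ N (DualModule S T) (i + 1)) : TorVanishAll S N T := by
  obtain ⟨Q, hQ⟩ := exists_isProjResolution Sᵐᵒᵖ N
  refine ⟨Q, hQ, fun j => (MTensor.map_exact_iff (hQ.exactSucc j).linearMap_comp_eq_zero).2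
    fun a ha => ?_⟩
  exact ((hQ.exact_iff_extZero (DualModule S T) j).2 (h j) a).1 ha

end FlatComplexes

/-! ## Tensor evaluation -/

section TensorEvaluation

variable {S R : Type u} [Ring S] [Ring R]
variable {T : Type u} [AddCommGroup T] [Module S T] [Module Rᵐᵒᵖ T] [SMulCommClass S Rᵐᵒᵖ T]
variable {N N' : Type u} [AddCommGroup N] [Module Sᵐᵒᵖ N] [AddCommGroup N'] [Module Sᵐᵒᵖ N']

/-- The `R`-linear version of `MTensor.map`. -/
def MTensor.mapR (R : Type u) [Ring R] (T : Type u) [AddCommGroup T] [Module S T]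
    [Module Rᵐᵒᵖ T] [SMulCommClass S Rᵐᵒᵖ T] (g : N →ₗ[Sᵐᵒᵖ] N') :
    MTensor S N T →ₗ[Rᵐᵒᵖ] MTensor S N' T where
  toFun := MTensor.map g
  map_add' := map_add _
  map_smul' ρ x := by
    refine DFunLike.congr_fun
      (f := (MTensor.map g).comp (DistribSMul.toAddMonoidHom (MTensor S N T) ρ))
      (g := (DistribSMul.toAddMonoidHom (MTensor S N' T) ρ).comp (MTensor.map g))
      (MTensor.addHom_ext fun n t => ?_) x
    show MTensor.map g (ρ • MTensor.mk n t) = ρ • MTensor.mk (g n) t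
    rw [MTensor.smul_mk, MTensor.smul_mk, MTensor.map_mk]

variable {Q Q' : Type u} [AddCommGroup Q] [Module Rᵐᵒᵖ Q] [AddCommGroup Q'] [Module Rᵐᵒᵖ Q']

/-- Precomposition with an `R`-linear map as an `S`-linear map. -/
def precompS (S : Type u) [Ring S] (T : Type u) [AddCommGroup T] [Module S T] [Module Rᵐᵒᵖ T]
    [SMulCommClass Rᵐᵒᵖ S T] (d : Q' →ₗ[Rᵐᵒᵖ] Q) : (Q →ₗ[Rᵐᵒᵖ] T) →ₗ[S] (Q' →ₗ[Rᵐᵒᵖ] T) where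
  toFun h := h.comp d
  map_add' _ _ := rfl
  map_smul' _ _ := rfl

variable [SMulCommClass Rᵐᵒᵖ S T]

variable (S R T N Q) in
/-- The natural map `N ⊗_S Hom_R(Q, T) → Hom_R(Q, N ⊗_S T)`. -/
def tensorEval : MTensor S N (Q →ₗ[Rᵐᵒᵖ] T) →+ (Q →ₗ[Rᵐᵒᵖ] MTensor S N T) :=
  MTensor.lift
    (AddMonoidHom.mk' (fun n => AddMonoidHom.mk' (fun h => (MTensor.theta R n).comp h)
        fun h h' => LinearMap.ext fun q => MTensor.mk_add n (h q) (h' q))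
      fun n n' => AddMonoidHom.ext fun h => LinearMap.ext fun q =>
        MTensor.mk_add_left n n' (h q))
    fun s n h => LinearMap.ext fun q => MTensor.mk_smul s n (h q)

@[simp] theorem tensorEval_mk_apply (n : N) (h : Q →ₗ[Rᵐᵒᵖ] T) (q : Q) :
    tensorEval S R T N Q (MTensor.mk n h) q = MTensor.mk n (h q) := rfl

theorem tensorEval_precompS (d : Q' →ₗ[Rᵐᵒᵖ] Q) (x : MTensor S N (Q →ₗ[Rᵐᵒᵖ] T)) :
    tensorEval S R T N Q' (MTensor.lmap (precompS S T d) x) =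
      (tensorEval S R T N Q x).comp d := by
  induction x using MTensor.induction_on with
  | h_zero => simp
  | h_mk n h => rfl
  | h_add x y hx hy => simp [hx, hy, LinearMap.add_comp]

theorem tensorEval_bijective (hQ : Module.Projective Rᵐᵒᵖ Q) (hfin : Module.Finite Rᵐᵒᵖ Q) :
    Function.Bijective (tensorEval S R T N Q) := by
  obtain ⟨m, f, hf⟩ := Module.Finite.exists_fin' Rᵐᵒᵖ Q
  obtain ⟨s, hs⟩ := Module.projective_lifting_property f LinearMap.id hf
  let b : Fin m → Q := fun i => f (Pi.single i 1)
  have hb : ∀ q, ∑ i, s q i • b i = q := fun q => by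
    refine Eq.trans ?_ (LinearMap.congr_fun hs q)
    rw [LinearMap.comp_apply, LinearMap.pi_apply_eq_sum_univ f (s q)]
    refine Finset.sum_congr rfl fun i _ => ?_
    have hsingle : (Pi.single i 1 : Fin m → Rᵐᵒᵖ) = fun j => if i = j then 1 else 0 := by
      ext j
      simp [Pi.single_apply, eq_comm]
    show s q i • f (Pi.single i 1) = _
    rw [hsingle]
  let c : Fin m → T →ₗ[S] (Q →ₗ[Rᵐᵒᵖ] T) := fun i =>
    { toFun := fun t =>
        { toFun := fun q => s q i • t
          map_add' := fun q q' => by simp [add_smul]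
          map_smul' := fun ρ q => by simp [mul_smul] }
      map_add' := fun t t' => LinearMap.ext fun q => smul_add _ _ _
      map_smul' := fun r t => LinearMap.ext fun q => smul_comm _ _ _ }
  have hc : ∀ i t q, c i t q = s q i • t := fun _ _ _ => rfl
  have hce : ∀ i x q, tensorEval S R T N Q (MTensor.lmap (c i) x) q = s q i • x := by
    intro i x q
    induction x using MTensor.induction_on with
    | h_zero => simp
    | h_mk n t =>
      rw [MTensor.lmap_mk, tensorEval_mk_apply, hc, MTensor.smul_mk]
    | h_add x y hx hy => simp [hx, hy]
  have hinv : ∀ x, ∑ i, MTensor.lmap (c i) (tensorEval S R T N Q x (b i)) = x := by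
    intro x
    induction x using MTensor.induction_on with
    | h_zero => simp
    | h_mk n h =>
      simp only [tensorEval_mk_apply, MTensor.lmap_mk]
      simp only [← MTensor.mkHom_apply]
      rw [← map_sum]
      congr 1
      ext q
      rw [LinearMap.sum_apply]
      simp only [hc, ← map_smul, ← map_sum, hb]
    | h_add x y hx hy =>
      simp only [map_add, LinearMap.add_apply, Finset.sum_add_distrib, hx, hy]
  refine ⟨Function.LeftInverse.injective
    (g := fun g : Q →ₗ[Rᵐᵒᵖ] MTensor S N T => ∑ i, MTensor.lmap (c i) (g (b i))) hinv, fun g => ?_⟩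
  refine ⟨∑ i, MTensor.lmap (c i) (g (b i)), LinearMap.ext fun q => ?_⟩
  rw [map_sum, LinearMap.sum_apply]
  simp only [hce]
  simp only [← map_smul, ← map_sum, hb]

end TensorEvaluation

section AuslanderFlat

variable {S R : Type u} [Ring S] [Ring R]
variable {T : Type u} [AddCommGroup T] [Module S T] [Module Rᵐᵒᵖ T] [SMulCommClass S Rᵐᵒᵖ T]
variable {N : Type u} [AddCommGroup N] [Module Sᵐᵒᵖ N]

theorem MTensor.eq_mk_one (x : MTensor S N S) : ∃ n, x = MTensor.mk n 1 := by
  induction x using MTensor.induction_on with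
  | h_zero => exact ⟨0, (MTensor.mk_zero_left 1).symm⟩
  | h_mk n s => exact ⟨op s • n, by rw [MTensor.mk_smul, smul_eq_mul, mul_one]⟩
  | h_add x y hx hy =>
    obtain ⟨n, rfl⟩ := hx
    obtain ⟨n', rfl⟩ := hy
    exact ⟨n + n', (MTensor.mk_add_left n n' 1).symm⟩

theorem MTensor.mk_one_injective :
    Function.Injective fun n : N => (MTensor.mk n 1 : MTensor S N S) := by
  let f : MTensor S N S →+ N := MTensor.lift
    (AddMonoidHom.mk' (fun n => AddMonoidHom.mk' (fun s => op s • n)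
        fun s s' => by simp [add_smul])
      fun n n' => by ext; simp)
    fun s n s' => by simp [mul_smul]
  refine Function.LeftInverse.injective (g := f) fun n => ?_
  show op (1 : S) • n = n
  simp

theorem IsFlatRightModule.extVanishAll_and_theta_bijective (hW : IsWakamatsuTilting S R T)
    (hN : IsFlatRightModule S N) :
    ExtVanishAll Rᵐᵒᵖ T (MTensor S N T) ∧ Function.Bijective (MTensor.thetaFun S N T R) := by
  have : SMulCommClass Rᵐᵒᵖ S T := SMulCommClass.symm S Rᵐᵒᵖ T
  obtain ⟨Q, hQ, hfin⟩ := hW.fgProjResR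
  have hev : ∀ n, Function.Bijective (tensorEval S R T N (Q.P n)) := fun n =>
    tensorEval_bijective (hQ.proj n) (hfin n)
  have hex : ∀ j, Function.Exact (precompS S T (Q.d j)) (precompS S T (Q.d (j + 1))) := fun j =>
    (hQ.exact_iff_extZero T j).2 (hW.extR.extZero j)
  let e : S →ₗ[S] (Q.P 0 →ₗ[Rᵐᵒᵖ] T) :=
    { toFun := fun s => (leftHomothety S R T s).comp Q.ε
      map_add' := fun s s' => LinearMap.ext fun q => add_smul s s' (Q.ε q)
      map_smul' := fun s s' => LinearMap.ext fun q => mul_smul s s' (Q.ε q) }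
  have he : ∀ s q, e s q = s • Q.ε q := fun _ _ => rfl
  have he_inj : Function.Injective e := by
    intro s s' h
    refine hW.bijS.1 (LinearMap.ext fun t => ?_)
    obtain ⟨q, rfl⟩ := hQ.surj t
    exact LinearMap.congr_fun h q
  have factor : ∀ (M : Type u) [AddCommGroup M] [Module Rᵐᵒᵖ M] (h : Q.P 0 →ₗ[Rᵐᵒᵖ] M),
      h.comp (Q.d 0) = 0 → ∃ k : T →ₗ[Rᵐᵒᵖ] M, k.comp Q.ε = h := by
    intro M _ _ h hh
    have hker : LinearMap.ker Q.ε ≤ LinearMap.ker h := by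
      intro x hx
      obtain ⟨y, rfl⟩ := (hQ.exact0 x).1 hx
      exact LinearMap.congr_fun hh y
    let i := Q.ε.quotKerEquivOfSurjective hQ.surj
    refine ⟨((LinearMap.ker Q.ε).liftQ h hker).comp i.symm.toLinearMap, LinearMap.ext fun x => ?_⟩
    have hx : i.symm (Q.ε x) = Submodule.Quotient.mk x := by
      rw [LinearEquiv.symm_apply_eq]; rfl
    show (LinearMap.ker Q.ε).liftQ h hker (i.symm (Q.ε x)) = h x
    rw [hx]
    rfl
  have he_ex : Function.Exact e (precompS S T (Q.d 0)) := by
    intro h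
    constructor
    · intro hh
      obtain ⟨k, rfl⟩ := factor T h hh
      obtain ⟨s, rfl⟩ := hW.bijS.2 k
      exact ⟨s, rfl⟩
    · rintro ⟨s, rfl⟩
      refine LinearMap.ext fun q => ?_
      show s • Q.ε (Q.d 0 q) = 0
      rw [hQ.exact0.apply_apply_eq_zero, smul_zero]
  have hev_e : ∀ n : N, tensorEval S R T N (Q.P 0) (MTensor.lmap e (MTensor.mk n 1)) =
      (MTensor.theta R n).comp Q.ε := fun n => LinearMap.ext fun q => by
    show MTensor.mk n ((1 : S) • Q.ε q) = MTensor.mk n (Q.ε q)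
    rw [one_smul]
  refine ⟨⟨Q, hQ, fun j => ?_⟩, fun n n' h => ?_, fun g => ?_⟩
  · intro h
    obtain ⟨x, rfl⟩ := (hev (j + 1)).2 h
    constructor
    · intro hh
      have h0 : MTensor.lmap (precompS S T (Q.d (j + 1))) x = 0 := by
        refine (hev (j + 1 + 1)).1 ?_
        rw [tensorEval_precompS, map_zero]
        exact hh
      obtain ⟨y, rfl⟩ := (hN.lmap_exact (hex j) x).1 h0
      exact ⟨tensorEval S R T N (Q.P j) y, (tensorEval_precompS (Q.d j) y).symm⟩
    · rintro ⟨k, hk⟩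
      rw [← hk]
      refine LinearMap.ext fun q => ?_
      show k (Q.d j (Q.d (j + 1) q)) = 0
      rw [(hQ.exactSucc j).apply_apply_eq_zero, map_zero]
  · refine MTensor.mk_one_injective (S := S) (hN _ _ e he_inj ((hev 0).1 ?_))
    have h' : MTensor.theta (S := S) (T := T) R n = MTensor.theta R n' := h
    rw [hev_e, hev_e, h']
  · obtain ⟨x, hx⟩ := (hev 0).2 (g.comp Q.ε)
    have h0 : MTensor.lmap (precompS S T (Q.d 0)) x = 0 := by
      refine (hev 1).1 ?_
      rw [tensorEval_precompS, map_zero, hx, LinearMap.comp_assoc,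
        hQ.exact0.linearMap_comp_eq_zero, LinearMap.comp_zero]
    obtain ⟨y, rfl⟩ := (hN.lmap_exact he_ex x).1 h0
    obtain ⟨n, rfl⟩ := MTensor.eq_mk_one y
    rw [hev_e] at hx
    refine ⟨n, LinearMap.ext fun t => ?_⟩
    obtain ⟨q, rfl⟩ := hQ.surj t
    exact LinearMap.congr_fun hx q

end AuslanderFlat

section AuslanderSyzygy

variable {S R : Type u} [Ring S] [Ring R]
variable {T : Type u} [AddCommGroup T] [Module S T] [Module Rᵐᵒᵖ T] [SMulCommClass S Rᵐᵒᵖ T]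
variable {M F B : Type u} [AddCommGroup M] [Module Sᵐᵒᵖ M] [AddCommGroup F] [Module Sᵐᵒᵖ F]
  [AddCommGroup B] [Module Sᵐᵒᵖ B] {f : M →ₗ[Sᵐᵒᵖ] F} {g : F →ₗ[Sᵐᵒᵖ] B}

theorem IsShortExact.mapR (h : IsShortExact f g) (hB : ExtZero Sᵐᵒᵖ B (DualModule S T) 1) :
    IsShortExact (MTensor.mapR R T f) (MTensor.mapR R T g) where
  inj := MTensor.map_injective_iff.2 (hB.exists_extension h)
  exact := MTensor.map_exact h.exact h.surj
  surj := MTensor.map_surjective h.surj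

theorem thetaFun_injective_of_injective (hf : Function.Injective f)
    (hF : Function.Injective (MTensor.thetaFun S F T R)) :
    Function.Injective (MTensor.thetaFun S M T R) := by
  intro m m' hm
  refine hf (hF (LinearMap.ext fun t => ?_))
  exact congrArg (MTensor.map f) (LinearMap.congr_fun hm t)

theorem thetaFun_surjective_of_isShortExact (h : IsShortExact f g)
    (hT : IsShortExact (MTensor.mapR R T f) (MTensor.mapR R T g))
    (hF : Function.Surjective (MTensor.thetaFun S F T R))
    (hB : Function.Injective (MTensor.thetaFun S B T R)) :
    Function.Surjective (MTensor.thetaFun S M T R) := by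
  intro a
  obtain ⟨x, hx⟩ := hF ((MTensor.mapR R T f).comp a)
  have hgx : g x = 0 := by
    refine hB (LinearMap.ext fun t => ?_)
    have h1 : MTensor.mapR R T g (MTensor.mk x t) = 0 := by
      rw [show MTensor.mk x t = MTensor.mapR R T f (a t) from LinearMap.congr_fun hx t]
      exact hT.exact.apply_apply_eq_zero (a t)
    exact h1.trans (MTensor.mk_zero_left t).symm
  obtain ⟨m, rfl⟩ := (h.exact x).1 hgx
  exact ⟨m, LinearMap.ext fun t => hT.inj (LinearMap.congr_fun hx t)⟩

theorem extZero_one_of_thetaFun_surjective (h : IsShortExact f g)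
    (hT : IsShortExact (MTensor.mapR R T f) (MTensor.mapR R T g))
    (hF : ExtZero Rᵐᵒᵖ T (MTensor S F T) 1)
    (hB : Function.Surjective (MTensor.thetaFun S B T R)) :
    ExtZero Rᵐᵒᵖ T (MTensor S M T) 1 := by
  refine extZero_one_of_lift hT hF fun a => ?_
  obtain ⟨y, rfl⟩ := hB a
  obtain ⟨x, rfl⟩ := h.surj y
  exact ⟨MTensor.theta R x, rfl⟩

end AuslanderSyzygy

/-- Let `T` be a Wakamatsu tilting `(S,R)`-bimodule and `N` a Gorenstein
flat right `S`-module. If either `pd(_S T) < ∞` or `id(_S T) < ∞`, then `N ∈ 𝒜_T(S)`. -/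
theorem gorensteinFlat_mem_auslander
    (S R : Type u) [Ring S] [Ring R]
    (T : Type u) [AddCommGroup T] [Module S T] [Module Rᵐᵒᵖ T] [SMulCommClass S Rᵐᵒᵖ T]
    (hW : IsWakamatsuTilting S R T)
    (N : Type u) [AddCommGroup N] [Module Sᵐᵒᵖ N] (hN : IsGorensteinFlat S N)
    (hT : (∃ n, ProjDimLE S T n) ∨ (∃ n, InjDimLE S T n)) :
    InAuslanderClass S R T N := by
  obtain ⟨C, hF, hC, hI, ⟨e⟩⟩ := hN
  have hExt : ∀ (i : ℕ) (j : ℤ),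
      ExtZero Sᵐᵒᵖ (LinearMap.ker (C.d j)) (DualModule S T) (i + 1) := by
    rcases hT with ⟨n, hn⟩ | ⟨n, hn⟩
    · exact hC.extZero_dual_of_projDimLE hF n (ModuleCat.of S T) hn
    · exact hC.extZero_dual_of_injDimLE hF hI n (ModuleCat.of S T) hn
  have hflat := fun j => IsFlatRightModule.extVanishAll_and_theta_bijective hW (hF j)
  have hmap : ∀ j, IsShortExact (MTensor.mapR R T (LinearMap.ker (C.d j)).subtype)
      (MTensor.mapR R T (hC.toKer j)) := fun j =>
    (hC.isShortExact j).mapR (hExt 0 (j + 1))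
  have hinj : ∀ j, Function.Injective (MTensor.thetaFun S (LinearMap.ker (C.d j)) T R) :=
    fun j => thetaFun_injective_of_injective (hC.isShortExact j).inj (hflat j).2.1
  have hsurj : ∀ j, Function.Surjective (MTensor.thetaFun S (LinearMap.ker (C.d j)) T R) :=
    fun j => thetaFun_surjective_of_isShortExact (hC.isShortExact j) (hmap j) (hflat j).2.2
      (hinj (j + 1))
  have hExtT : ∀ (i : ℕ) (j : ℤ),
      ExtZero Rᵐᵒᵖ T (MTensor S (LinearMap.ker (C.d j)) T) (i + 1) := by
    intro i
    induction i with
    | zero =>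
      exact fun j => extZero_one_of_thetaFun_surjective (hC.isShortExact j) (hmap j)
        ((hflat j).1.extZero 0) (hsurj (j + 1))
    | succ i ih => exact fun j => (ih (j + 1)).co_left (hmap j) ((hflat j).1.extZero (i + 1))
  have hs : IsShortExact ((LinearMap.ker (C.d 0)).subtype.comp e.toLinearMap) (hC.toKer 0) :=
    ⟨(hC.isShortExact 0).inj.comp e.injective,
      fun x => ((hC.isShortExact 0).exact x).trans
        ⟨fun ⟨y, hy⟩ => ⟨e.symm y, by simpa using hy⟩, fun ⟨n, hn⟩ => ⟨e n, hn⟩⟩,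
      (hC.isShortExact 0).surj⟩
  have hsT := hs.mapR (R := R) (hExt 0 (0 + 1))
  obtain ⟨Q, hQ, -⟩ := hW.fgProjResR
  refine ⟨torVanishAll_of_extZero_dual fun i => ?_, ⟨Q, hQ, fun j =>
    (hQ.exact_iff_extZero _ j).2 ?_⟩, thetaFun_injective_of_injective hs.inj (hflat 0).2.1,
    thetaFun_surjective_of_isShortExact hs hsT (hflat 0).2.2 (hinj (0 + 1))⟩
  · exact ExtZero.contra_left hs ((hF 0).extZero_dual T i) (hExt (i + 1) (0 + 1))
  · cases j with
    | zero =>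
      exact extZero_one_of_thetaFun_surjective hs hsT ((hflat 0).1.extZero 0)
        (hsurj (0 + 1))
    | succ j => exact (hExtT j (0 + 1)).co_left hsT ((hflat 0).1.extZero (j + 1))
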